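/- For every integer n ≥ 1, ∑_{π ∈ D_n} (-1)^{inv(π)} ∏_{j ∈ EXCi(π)} x_j = (-1)^{n-1} ∑_{j=1}^{n-1} x_1 x_2 ⋯ x_j, as an identity of polynomials in the commuting variables x_1,…,x_n. -/

import Mathlib

open Finset MvPolynomial

/-- Number of inversions of a permutation of `Fin n`
(pairs `p.1 < p.2` with `π p.1 > π p.2`). -/
def inversions {n : ℕ} (π : Equiv.Perm (Fin n)) : ℕ :=
  (Finset.univ.filter fun p : Fin n × Fin n => p.1 < p.2 ∧ π p.2 < π p.1).card

/-- Excedance indices of a permutation. -/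
def EXCi {n : ℕ} (π : Equiv.Perm (Fin n)) : Finset (Fin n) :=
  Finset.univ.filter fun i => i < π i

/-- Excedance values of a permutation. -/
def EXCv {n : ℕ} (π : Equiv.Perm (Fin n)) : Finset (Fin n) :=
  (EXCi π).image π

/-- Right-to-left minima indices of a permutation. -/
def RLMi {n : ℕ} (π : Equiv.Perm (Fin n)) : Finset (Fin n) :=
  Finset.univ.filter fun i => ∀ j, i < j → π i < π j

/-- Right-to-left minima values of a permutation. -/
def RLMv {n : ℕ} (π : Equiv.Perm (Fin n)) : Finset (Fin n) :=
  (RLMi π).image π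

/-- The derangements of `Fin n`, i.e. permutations with no fixed point. -/
def derangementsF (n : ℕ) : Finset (Equiv.Perm (Fin n)) :=
  Finset.univ.filter fun π => ∀ i, π i ≠ i

/-!
Because `(-1) ^ inversions π` is the sign of `π`, the left-hand side is the determinant of the
matrix with entry `x i` in row `i` above the diagonal, `0` on the diagonal and `1` below it.
Weighted by the partial products `w i = x 0 ⋯ x (i - 1)`, its rows add up to a constant vector:
since `w i * x i = w (i + 1)`, in column `j` the rows `i < j` contribute `w 1, …, w j` and the
rows `i > j` contribute `w (j + 1), …, w (n - 1)`. As `w 0 = 1`, the determinant is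
`w 1 + ⋯ + w (n - 1)` times that of the matrix with first row replaced by ones, and subtracting this
row from all the others makes the latter triangular with diagonal `1, -1, …, -1`.
-/

theorem sign_eq_neg_one_pow_inversions {n : ℕ} (π : Equiv.Perm (Fin n)) :
    Equiv.Perm.sign π = (-1) ^ inversions π := by
  rw [Equiv.Perm.sign_eq_prod_prod_Ioi, inversions, ← prod_const, prod_filter,
    Fintype.prod_prod_type]
  refine prod_congr rfl fun i _ => ?_
  rw [← filter_lt_eq_Ioi, prod_filter]
  refine prod_congr rfl fun j _ => ?_
  by_cases hij : i < j
  · rcases (π.injective.ne hij.ne).lt_or_gt with h | h <;> simp [hij, h, h.not_gt]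
  · simp [hij]

theorem partialProd_eq_prod_filter {M : Type*} [CommMonoid M] {n : ℕ} (f : Fin n → M)
    (j : Fin (n + 1)) : Fin.partialProd f j = ∏ i ∈ {i : Fin n | (i : ℕ) < j}, f i := by
  induction j using Fin.induction with
  | zero => simp
  | succ j ih =>
    have filter_succ : ({i | (i : ℕ) < j.succ} : Finset (Fin n)) =
        insert j ({i | (i : ℕ) < j.castSucc} : Finset (Fin n)) := by
      ext i
      simp only [mem_filter, mem_univ, true_and, mem_insert, Fin.ext_iff, Fin.val_succ,
        Fin.val_castSucc]
      omega
    rw [Fin.partialProd_succ, ih, filter_succ, prod_insert (by simp), mul_comm]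

/-- The matrix whose row `i` has entries `x i` above the diagonal, `0` on it and `1` below it. The
term of `π` in the row expansion of its determinant is nonzero only for derangements, where it is,
up to sign, the product of `x i` over the excedance indices `i` of `π`. -/
def excedanceMatrix {ι R : Type*} [LT ι] [DecidableLT ι] [Zero R] [One R] (x : ι → R) :
    Matrix ι ι R :=
  Matrix.of fun i j => if i < j then x i else if j < i then 1 else 0

namespace excedanceMatrix

section Entries

variable {ι R : Type*} [Preorder ι] [DecidableLT ι] [Zero R] [One R] (x : ι → R) {i j : ι}

theorem apply_of_lt (h : i < j) : excedanceMatrix x i j = x i := if_pos h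

theorem apply_of_gt (h : j < i) : excedanceMatrix x i j = 1 := by
  simp [excedanceMatrix, h, h.not_gt]

@[simp]
theorem apply_self (i : ι) : excedanceMatrix x i i = 0 := by
  simp [excedanceMatrix]

end Entries

section Derangements

variable {R : Type*} {n : ℕ} (x : Fin n → R) {π : Equiv.Perm (Fin n)}

theorem prod_apply_of_mem_derangementsF [CommMonoidWithZero R] (hπ : π ∈ derangementsF n) :
    ∏ i, excedanceMatrix x i (π i) = ∏ i ∈ EXCi π, x i := by
  rw [EXCi, prod_filter]
  refine prod_congr rfl fun i _ => ?_
  rcases ((mem_filter.mp hπ).2 i).lt_or_gt with h | h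
  · rw [apply_of_gt x h, if_neg h.not_gt]
  · rw [apply_of_lt x h, if_pos h]

theorem prod_apply_of_notMem_derangementsF [CommMonoidWithZero R] (hπ : π ∉ derangementsF n) :
    ∏ i, excedanceMatrix x i (π i) = 0 := by
  obtain ⟨i, hi⟩ : ∃ i, π i = i := by simpa [derangementsF] using hπ
  exact prod_eq_zero (mem_univ i) (by rw [hi, apply_self])

theorem det_eq_sum_derangementsF [CommRing R] :
    (excedanceMatrix x).det =
      ∑ π ∈ derangementsF n, (-1) ^ inversions π * ∏ i ∈ EXCi π, x i := by
  rw [← Matrix.det_transpose, Matrix.det_apply']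
  simp only [Matrix.transpose_apply, sign_eq_neg_one_pow_inversions, Units.val_pow_eq_pow_val,
    Units.val_neg, Units.val_one, Int.cast_pow, Int.cast_neg, Int.cast_one]
  rw [← sum_subset (subset_univ (derangementsF n)) fun π _ hπ => by
    rw [prod_apply_of_notMem_derangementsF x hπ, mul_zero]]
  exact sum_congr rfl fun π hπ => by rw [prod_apply_of_mem_derangementsF x hπ]

end Derangements

section Determinant

variable {R : Type*} {n : ℕ} (x : Fin (n + 1) → R)

theorem partialProd_init_mul_apply_succAbove [MonoidWithZero R] (j : Fin (n + 1)) (k : Fin n) :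
    Fin.partialProd (Fin.init x) (j.succAbove k) * excedanceMatrix x (j.succAbove k) j =
      Fin.partialProd (Fin.init x) k.succ := by
  rcases lt_or_ge k.castSucc j with h | h
  · rw [Fin.succAbove_of_castSucc_lt j k h, apply_of_lt x h, Fin.partialProd_succ, Fin.init]
  · rw [Fin.succAbove_of_le_castSucc j k h, apply_of_gt x (Fin.le_castSucc_iff.mp h), mul_one]

theorem sum_partialProd_init_smul_row [Semiring R] :
    ∑ i, Fin.partialProd (Fin.init x) i • excedanceMatrix x i =
      (∑ k : Fin n, Fin.partialProd (Fin.init x) k.succ) • 1 := by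
  ext j
  simp [Finset.sum_apply, Fin.sum_univ_succAbove _ j, partialProd_init_mul_apply_succAbove]

theorem det_updateRow_zero_one [CommRing R] :
    ((excedanceMatrix x).updateRow 0 1).det = (-1) ^ n := by
  let T : Matrix (Fin (n + 1)) (Fin (n + 1)) R :=
    (Matrix.of fun i j => excedanceMatrix x i j - 1).updateRow 0 1
  have det_eq : ((excedanceMatrix x).updateRow 0 1).det = T.det := by
    refine Matrix.det_eq_of_forall_row_eq_smul_add_const (fun i => if i = 0 then 0 else 1) 0
      (if_pos rfl) fun i j => ?_
    by_cases hi : i = 0 <;> simp [T, hi]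
  have isUpperTriangular : T.IsUpperTriangular := fun i j (hij : j < i) => by
    simp [T, Matrix.updateRow_ne (Fin.ne_zero_of_lt hij), apply_of_gt x hij]
  rw [det_eq, Matrix.det_of_isUpperTriangular isUpperTriangular, Fin.prod_univ_succ]
  simp [T]

theorem det_eq_sum_partialProd_init [CommRing R] :
    (excedanceMatrix x).det = (-1) ^ n * ∑ k : Fin n, Fin.partialProd (Fin.init x) k.succ := by
  have h := Matrix.det_updateRow_sum (excedanceMatrix x) 0 (Fin.partialProd (Fin.init x))
  rwa [sum_partialProd_init_smul_row, Matrix.det_updateRow_smul, det_updateRow_zero_one,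
    Fin.partialProd_zero, one_smul, mul_comm, eq_comm] at h

end Determinant

end excedanceMatrix

theorem sum_partialProd_init_succ {R : Type*} [CommSemiring R] {n : ℕ} (x : Fin (n + 1) → R) :
    ∑ k : Fin n, Fin.partialProd (Fin.init x) k.succ =
      ∑ j ∈ Icc 1 n, ∏ i ∈ {i : Fin (n + 1) | (i : ℕ) < j}, x i := by
  simp_rw [Fin.partialProd_init, partialProd_eq_prod_filter, Fin.val_castSucc, Fin.val_succ]
  rw [Fin.sum_univ_eq_sum_range fun k => ∏ i ∈ {i : Fin (n + 1) | (i : ℕ) < k + 1}, x i,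
    range_eq_Ico, sum_Ico_add' fun j => ∏ i ∈ {i : Fin (n + 1) | (i : ℕ) < j}, x i]
  rfl

theorem stmt10_general {R : Type*} [CommRing R] (n : ℕ) (hn : 1 ≤ n) (x : Fin n → R) :
    ∑ π ∈ derangementsF n, (-1) ^ inversions π * ∏ j ∈ EXCi π, x j =
      (-1) ^ (n - 1) * ∑ j ∈ Icc 1 (n - 1), ∏ i ∈ {i : Fin n | (i : ℕ) < j}, x i := by
  obtain ⟨m, rfl⟩ := Nat.exists_eq_add_of_le' hn
  rw [← excedanceMatrix.det_eq_sum_derangementsF, excedanceMatrix.det_eq_sum_partialProd_init,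
    sum_partialProd_init_succ, Nat.add_sub_cancel]

/-- Here `Fin n` represents `[n]` via `i ↦ i + 1`; the product
`x_1 ⋯ x_j` corresponds to the product of `X i` over `(i : ℕ) < j`. -/
theorem stmt10 (n : ℕ) (hn : 1 ≤ n) :
    ∑ π ∈ derangementsF n,
      ((-1 : MvPolynomial (Fin n) ℤ) ^ inversions π) * ∏ j ∈ EXCi π, X j
    = (-1) ^ (n - 1) *
        ∑ j ∈ Finset.Icc 1 (n - 1),
          ∏ i ∈ Finset.univ.filter (fun i : Fin n => (i : ℕ) < j),
            (X i : MvPolynomial (Fin n) ℤ) :=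
  stmt10_general n hn X
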